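/- arXiv:1208.3965 — 2 statements merged into one kernel-verified Lean document; each statement's English description precedes it below -/
import Mathlib

section
/- Let G be a connected simple graph, let H be a branch of G with root u such that H is a connected bipartite graph, and let x be a first Q-eigenvector of G. If x(u) ≠ 0, then x(p) ≠ 0 for every vertex p of H; moreover, for every vertex p of H, x(p)·x(u) > 0 if p lies in the same part of the bipartition of H as u, and x(p)·x(u) < 0 otherwise; consequently x(p)·x(q) < 0 for every edge pq of H. -/
/-!
The least eigenvalue `qmin G` is the minimum of the Rayleigh quotient of `Q(G)`, whose quadratic
form is `∑ (x a + x b)²` over the edges `ab`. Given a first eigenvector `x` with `x u ≠ 0`, let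
`y` agree with `x` off the branch and, on the branch, have the absolute values of `x` with signs
alternating according to the bipartition, normalized so that `y u = x u` (`flipSign`). Edges leaving
the branch do so at `u`, so their terms do not change, and an edge `ab` of the branch contributes
`(|x a| - |x b|)² ≤ (x a + x b)²`. As `y` has the norm of `x`, it is again a minimizer. Hence `y` is
an eigenvector, and equality holds on each edge.

Since `y` is an eigenvector, `y p = 0` at a branch vertex `p ≠ u` makes the values at its neighbours,
which all have the same sign, sum to zero; so a zero would spread along the connected branch to `u`.
Therefore `x` has no zero on the branch, and equality on the edges gives `x a * x b < 0`.
-/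

open SimpleGraph Finset Matrix
open scoped Classical

/-- The signless Laplacian matrix `Q(G) = D(G) + A(G)` of a simple graph. -/
noncomputable def Qmatrix {V : Type*} [Fintype V] (G : SimpleGraph V) : Matrix V V ℝ :=
  G.degMatrix ℝ + G.adjMatrix ℝ

/-- The least eigenvalue of the signless Laplacian of `G`. -/
noncomputable def qmin {V : Type*} [Fintype V] (G : SimpleGraph V) : ℝ :=
  sInf {q : ℝ | ∃ x : V → ℝ, x ≠ 0 ∧ Qmatrix G *ᵥ x = q • x}

/-- A first `Q`-eigenvector of `G`: an eigenvector of `Q(G)` for the least eigenvalue. -/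
def IsFirstQEigenvector {V : Type*} [Fintype V] (G : SimpleGraph V) (x : V → ℝ) : Prop :=
  x ≠ 0 ∧ Qmatrix G *ᵥ x = qmin G • x

/-- `S` (together with the root `u ∈ S`) induces a branch of `G` with root `u`:
no edge of `G` joins `S \ {u}` to the complement of `S`. -/
def IsBranch {V : Type*} (G : SimpleGraph V) (S : Set V) (u : V) : Prop :=
  u ∈ S ∧ ∀ a ∈ S, a ≠ u → ∀ b ∉ S, ¬ G.Adj a b

/-- Twice the quadratic form of `Q(G)`, as a sum over ordered pairs of adjacent vertices. -/
lemma two_mul_dotProduct_Qmatrix {V : Type*} [Fintype V] (G : SimpleGraph V) (y : V → ℝ) :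
    2 * (y ⬝ᵥ (Qmatrix G *ᵥ y)) = ∑ a, ∑ b, if G.Adj a b then (y a + y b) ^ 2 else 0 := by
  have h1 : y ⬝ᵥ (Qmatrix G *ᵥ y)
      = ∑ a, ∑ b, if G.Adj a b then (y a ^ 2 + y a * y b) else 0 := by
    simp only [dotProduct]
    refine Finset.sum_congr rfl fun a _ => ?_
    rw [Qmatrix, add_mulVec, Pi.add_apply, adjMatrix_mulVec_apply, degMatrix,
      mulVec_diagonal, ← Finset.sum_filter, Finset.sum_add_distrib, mul_add,
      ← neighborFinset_eq_filter, Finset.sum_const, card_neighborFinset_eq_degree,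
      Finset.mul_sum, nsmul_eq_mul]
    ring
  have h2 : y ⬝ᵥ (Qmatrix G *ᵥ y)
      = ∑ a, ∑ b, if G.Adj a b then (y b ^ 2 + y a * y b) else 0 := by
    rw [h1, Finset.sum_comm]
    refine Finset.sum_congr rfl fun a _ => Finset.sum_congr rfl fun b _ => ?_
    simp only [G.adj_comm b a, mul_comm (y b)]
  rw [two_mul]
  nth_rewrite 1 [h1]
  rw [h2, ← Finset.sum_add_distrib]
  refine Finset.sum_congr rfl fun a _ => ?_
  rw [← Finset.sum_add_distrib]
  refine Finset.sum_congr rfl fun b _ => ?_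
  split_ifs <;> ring

lemma Qmatrix_isHermitian {V : Type*} [Fintype V] (G : SimpleGraph V) :
    (Qmatrix G).IsHermitian := by
  rw [Matrix.IsHermitian, conjTranspose_eq_transpose_of_trivial, Qmatrix, transpose_add,
    transpose_adjMatrix, degMatrix, diagonal_transpose]

lemma qmin_le {V : Type*} [Fintype V] (G : SimpleGraph V) {q : ℝ} {x : V → ℝ} (hx : x ≠ 0)
    (h : Qmatrix G *ᵥ x = q • x) : qmin G ≤ q := by
  -- `sInf` is meaningful because every eigenvalue of `Q(G)` is nonnegative.
  refine csInf_le ⟨0, ?_⟩ ⟨x, hx, h⟩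
  rintro r ⟨z, hz, hr⟩
  have h0 : 0 ≤ 2 * (z ⬝ᵥ (Qmatrix G *ᵥ z)) := by
    rw [two_mul_dotProduct_Qmatrix]
    refine Finset.sum_nonneg fun a _ => Finset.sum_nonneg fun b _ => ?_
    split_ifs <;> positivity
  rw [hr, dotProduct_smul, smul_eq_mul] at h0
  have hpos : 0 < z ⬝ᵥ z := by
    refine lt_of_le_of_ne (Finset.sum_nonneg fun a _ => mul_self_nonneg _) fun h => hz ?_
    exact dotProduct_self_eq_zero.mp h.symm
  by_contra! hneg
  nlinarith [mul_neg_of_neg_of_pos hneg hpos]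

/-- `qmin G` is a lower bound for the Rayleigh quotient of `Q(G)`. -/
lemma Qmatrix_sub_qmin_posSemidef {V : Type*} [Fintype V] (G : SimpleGraph V) :
    (Qmatrix G - qmin G • (1 : Matrix V V ℝ)).PosSemidef := by
  have hH : (Qmatrix G - qmin G • (1 : Matrix V V ℝ)).IsHermitian := by
    refine (Qmatrix_isHermitian G).sub ?_
    simp [Matrix.IsHermitian]
  rw [hH.posSemidef_iff_eigenvalues_nonneg]
  intro i
  have h1 := hH.mulVec_eigenvectorBasis i
  rw [sub_mulVec, smul_mulVec, one_mulVec, sub_eq_iff_eq_add, ← add_smul] at h1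
  have h2 := qmin_le G ?_ h1
  · simpa using h2
  · intro h0
    exact hH.eigenvectorBasis.orthonormal.ne_zero i (by ext j; exact congrFun h0 j)

/-- The vector with the absolute values of `x` on `S`, with sign `τ` on the colour class `k` and
`-τ` on the other one, and equal to `x` outside `S`. -/
noncomputable def flipSign {V : Type*} (S : Set V) (c : S → Bool) (k : Bool) (τ : ℝ) (x : V → ℝ) :
    V → ℝ :=
  fun a => if h : a ∈ S then (if c ⟨a, h⟩ = k then τ else -τ) * |x a| else x a

theorem stmt_1 {V : Type*} [Fintype V] (G : SimpleGraph V) (hG : G.Connected)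
    (S : Set V) (u : V) (hbr : IsBranch G S u)
    (hHconn : (G.induce S).Connected)
    (c : S → Bool) (hc : ∀ a b : S, (G.induce S).Adj a b → c a ≠ c b)
    (x : V → ℝ) (hx : IsFirstQEigenvector G x) (hu : x u ≠ 0) :
    (∀ p : S, x p ≠ 0) ∧
    (∀ p : S, (0 < x p * x u ↔ c p = c ⟨u, hbr.1⟩) ∧ (x p * x u < 0 ↔ c p ≠ c ⟨u, hbr.1⟩)) ∧
    (∀ p q : S, (G.induce S).Adj p q → x p * x q < 0) := by
  obtain ⟨huS, hout⟩ := hbr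
  obtain ⟨hx0, hxe⟩ := hx
  obtain ⟨τ, hτ, hτu⟩ : ∃ τ : ℝ, τ ^ 2 = 1 ∧ τ * |x u| = x u := by
    rcases abs_cases (x u) with ⟨h, -⟩ | ⟨h, -⟩
    · exact ⟨1, by norm_num, by rw [h]; ring⟩
    · exact ⟨-1, by norm_num, by rw [h]; ring⟩
  set k := c ⟨u, huS⟩ with hk
  set y := flipSign S c k τ x with hy
  have yin : ∀ (a : V) (h : a ∈ S), y a = (if c ⟨a, h⟩ = k then τ else -τ) * |x a| :=
    fun a h => by simp [hy, flipSign, h]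
  have yout : ∀ a : V, a ∉ S → y a = x a := fun a h => by simp [hy, flipSign, h]
  have yu : y u = x u := by rw [yin u huS, if_pos hk.symm, hτu]
  have ysq : ∀ a, y a ^ 2 = x a ^ 2 := by
    intro a
    by_cases h : a ∈ S
    · rw [yin a h]
      split_ifs
      · rw [mul_pow, hτ, sq_abs, one_mul]
      · rw [mul_pow, neg_sq, hτ, sq_abs, one_mul]
    · rw [yout a h]
  have yedge : ∀ a b (ha : a ∈ S) (hb : b ∈ S), G.Adj a b →
      y b = -(if c ⟨a, ha⟩ = k then τ else -τ) * |x b| := by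
    intro a b ha hb hab
    have := hc ⟨a, ha⟩ ⟨b, hb⟩ hab
    rw [yin b hb]
    by_cases h1 : c ⟨a, ha⟩ = k <;> by_cases h2 : c ⟨b, hb⟩ = k
    · exact absurd (h1.trans h2.symm) this
    · simp [h1, h2]
    · simp [h1, h2]
    · revert this h1 h2
      cases c ⟨a, ha⟩ <;> cases c ⟨b, hb⟩ <;> cases k <;> simp
  have σsq : ∀ a : S, (if c a = k then τ else -τ) ^ 2 = 1 := by
    intro a; split_ifs <;> simp [hτ]
  have yform : ∀ a b (_ : a ∈ S) (_ : b ∈ S), G.Adj a b →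
      (y a + y b) ^ 2 = (|x a| - |x b|) ^ 2 := by
    intro a b ha hb hab
    rw [yedge a b ha hb hab, yin a ha]
    linear_combination (|x a| - |x b|) ^ 2 * σsq ⟨a, ha⟩
  have hle : ∀ a b, (if G.Adj a b then (y a + y b) ^ 2 else 0) ≤
      (if G.Adj a b then (x a + x b) ^ 2 else 0) := by
    intro a b
    split_ifs with hab
    · by_cases ha : a ∈ S <;> by_cases hb : b ∈ S
      · rw [yform a b ha hb hab]
        have h1 := neg_abs_le (x a * x b)
        rw [abs_mul] at h1
        nlinarith [sq_abs (x a), sq_abs (x b)]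
      · have : a = u := by
          by_contra h; exact hout a ha h b hb hab
        rw [yout b hb, this, yu]
      · have : b = u := by
          by_contra h; exact hout b hb h a ha hab.symm
        rw [yout a ha, this, yu]
      · rw [yout a ha, yout b hb]
    · exact le_rfl
  have hnorm : y ⬝ᵥ y = x ⬝ᵥ x := by
    simp only [dotProduct]
    exact Finset.sum_congr rfl fun a _ => by rw [← sq, ← sq, ysq]
  have hPSD := Qmatrix_sub_qmin_posSemidef G
  have hform : ∀ z : V → ℝ, z ⬝ᵥ ((Qmatrix G - qmin G • (1 : Matrix V V ℝ)) *ᵥ z)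
      = z ⬝ᵥ (Qmatrix G *ᵥ z) - qmin G * (z ⬝ᵥ z) := by
    intro z
    rw [sub_mulVec, smul_mulVec, one_mulVec, dotProduct_sub, dotProduct_smul, smul_eq_mul]
  have hlow : 0 ≤ y ⬝ᵥ (Qmatrix G *ᵥ y) - qmin G * (y ⬝ᵥ y) := by
    rw [← hform]
    simpa using hPSD.dotProduct_mulVec_nonneg y
  have hxq : x ⬝ᵥ (Qmatrix G *ᵥ x) = qmin G * (x ⬝ᵥ x) := by
    rw [hxe, dotProduct_smul, smul_eq_mul]
  have hsum : ∀ a ∈ (Finset.univ : Finset V),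
      (∑ b, if G.Adj a b then (y a + y b) ^ 2 else 0) ≤
      ∑ b, if G.Adj a b then (x a + x b) ^ 2 else 0 :=
    fun a _ => Finset.sum_le_sum fun b _ => hle a b
  have htot := Finset.sum_le_sum hsum
  have hqy := two_mul_dotProduct_Qmatrix G y
  have hqx := two_mul_dotProduct_Qmatrix G x
  rw [hnorm] at hlow
  -- The Rayleigh quotients of `x` and `y` coincide.
  have heq : y ⬝ᵥ (Qmatrix G *ᵥ y) = x ⬝ᵥ (Qmatrix G *ᵥ x) := by linarith
  have hterm : ∀ a b, G.Adj a b → (y a + y b) ^ 2 = (x a + x b) ^ 2 := by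
    intro a b hab
    have h1 := (Finset.sum_eq_sum_iff_of_le hsum).mp (by rw [← hqy, ← hqx, heq]) a
      (Finset.mem_univ a)
    have h2 := (Finset.sum_eq_sum_iff_of_le (fun b _ => hle a b)).mp h1 b (Finset.mem_univ b)
    simpa [hab] using h2
  have hye : Qmatrix G *ᵥ y = qmin G • y := by
    have h0 : (Qmatrix G - qmin G • (1 : Matrix V V ℝ)) *ᵥ y = 0 := by
      rw [← hPSD.dotProduct_mulVec_zero_iff, star_trivial, hform, heq, hnorm, hxq, sub_self]
    rwa [sub_mulVec, smul_mulVec, one_mulVec, sub_eq_zero] at h0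
  have hprop : ∀ a b : S, (G.induce S).Adj a b → x a = 0 → x b = 0 := by
    intro a b hab ha0
    have hau : (a : V) ≠ u := fun h => hu (h ▸ ha0)
    have hya : y a = 0 := by rw [yin a a.2, ha0]; simp
    have h1 := congrFun hye a
    rw [Qmatrix, add_mulVec, Pi.add_apply, adjMatrix_mulVec_apply, degMatrix,
      mulVec_diagonal, Pi.smul_apply, hya, mul_zero, smul_zero, zero_add] at h1
    -- All neighbours of `a` lie in `S`, in the colour class opposite to that of `a`.
    have h2 : ∀ w ∈ G.neighborFinset (a : V),
        y w = -(if c a = k then τ else -τ) * |x w| := by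
      intro w hw
      rw [mem_neighborFinset] at hw
      have hwS : w ∈ S := by
        by_contra h; exact hout a a.2 hau w h hw
      exact yedge a w a.2 hwS hw
    rw [Finset.sum_congr rfl h2, ← Finset.mul_sum] at h1
    have hne : -(if c a = k then τ else -τ) ≠ 0 := by
      intro h
      have := σsq a
      rw [neg_eq_zero.mp h] at this
      norm_num at this
    have h3 := (mul_eq_zero.mp h1).resolve_left hne
    rw [Finset.sum_eq_zero_iff_of_nonneg fun w _ => abs_nonneg _] at h3
    exact abs_eq_zero.mp (h3 b ((mem_neighborFinset ..).mpr hab))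
  have hnz : ∀ p : S, x p ≠ 0 := by
    intro p hp
    obtain ⟨w⟩ := hHconn.preconnected p ⟨u, huS⟩
    have : ∀ (p q : S), (G.induce S).Walk p q → x p = 0 → x q = 0 := by
      intro p q w
      induction w with
      | nil => exact id
      | cons h _ ih => exact fun h0 => ih (hprop _ _ h h0)
    exact hu (this _ _ w hp)
  have hedge : ∀ p q : S, (G.induce S).Adj p q → x p * x q < 0 := by
    intro p q hpq
    have h1 := hterm p q hpq
    rw [yform p q p.2 q.2 hpq] at h1
    have h2 : x p * x q = -(|x p| * |x q|) := by
      nlinarith [sq_abs (x p), sq_abs (x q)]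
    rw [h2, neg_lt_zero]
    exact mul_pos (abs_pos.mpr (hnz p)) (abs_pos.mpr (hnz q))
  have hsign : ∀ (p q : S), (G.induce S).Walk p q →
      (c p = c q → 0 < x p * x q) ∧ (c p ≠ c q → x p * x q < 0) := by
    intro p q w
    induction w with
    | nil => exact ⟨fun _ => mul_self_pos.mpr (hnz _), fun h => absurd rfl h⟩
    | @cons p r q h _ ih =>
      have hpr := hedge p r h
      have hr := sq_pos_of_ne_zero (hnz r)
      have hcpr := hc p r h
      have key : (x p * x r) * (x r * x q) = x r ^ 2 * (x p * x q) := by ring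
      constructor
      · intro hpq
        have h1 := ih.2 (fun h => hcpr (hpq.trans h.symm))
        exact pos_of_mul_pos_right (key ▸ mul_pos_of_neg_of_neg hpr h1) hr.le
      · intro hpq
        have h1 := ih.1 (by
          revert hcpr hpq
          cases c p <;> cases c q <;> cases c r <;> simp)
        have h2 := key ▸ mul_neg_of_neg_of_pos hpr h1
        exact neg_of_mul_neg_right h2 hr.le
  refine ⟨hnz, fun p => ?_, hedge⟩
  obtain ⟨w⟩ := hHconn.preconnected p ⟨u, huS⟩
  obtain ⟨h1, h2⟩ := hsign _ _ w
  refine ⟨⟨fun h => ?_, h1⟩, ⟨fun h he => ?_, h2⟩⟩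
  · by_contra hne
    exact lt_asymm h (h2 hne)
  · exact lt_asymm h (h1 he)
end

section
/- Let G be a connected non-bipartite simple graph of order n containing exactly k ≥ 1 pendant vertices (so n ≥ k + 3). Then q_min(G) ≤ ( n − k + k/(n−k) − √( (n−k−2)² + 2k + k²/(n−k)² ) ) / 2. Consequently, for any connected non-bipartite graph G of order n containing at least one pendant vertex, q_min(G) ≤ ( n − 1 + 1/(n−1) − √( n² − 6n + 11 + 1/(n−1)² ) ) / 2. -/
/-!
Write `m = n - k` for the number of non-pendant vertices and `t = k / m`. The first bound is the
smaller root `lam` of `X² - (m + t) X + (m - 1)`, that is, of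
`(m - 1) (1 - X) = X (1 - X) + t X`, and `0 ≤ lam < 1`.

A connected non-bipartite graph is not `K₂`, so every pendant vertex hangs on a non-pendant one
(`neighbor_not_pendant`), and by pigeonhole some non-pendant `v` carries `p ≥ t` pendant
neighbours. Besides these, `v` has at most `m - 1` neighbours. The Rayleigh quotient of the vector
equal to `1` at `v`, to `-1 / (1 - lam)` at the pendant neighbours of `v` and to `0` elsewhere is
then at most `lam` (`qmin_le_of_pendants`, `starVec_quadForm`), and the least eigenvalue is at most
any Rayleigh quotient (`qmin_le_of_rayleigh`).

The second bound is the same root for `m = n - 1`, `t = 1 / (n - 1)`. The same vertex `v` serves,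
since `m - 1 ≤ n - 2` and `p ≥ k / m ≥ 1 / (n - 1)`.
-/

open SimpleGraph Finset Matrix
open scoped Classical

/-- The least signless Laplacian eigenvalue is at most every upper bound of a Rayleigh quotient. -/
lemma qmin_le_of_rayleigh {V : Type*} [Fintype V] (G : SimpleGraph V) (x : V → ℝ) (hx : x ≠ 0)
    (lam : ℝ) (h : x ⬝ᵥ (Qmatrix G *ᵥ x) ≤ lam * (x ⬝ᵥ x)) : qmin G ≤ lam := by
  have hQ : (Qmatrix G).IsHermitian := by
    unfold Qmatrix SimpleGraph.degMatrix
    refine Matrix.IsHermitian.add (Matrix.isHermitian_diagonal _) ?_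
    ext i j
    simp [SimpleGraph.adjMatrix_apply, G.adj_comm]
  have hM : (Qmatrix G - lam • (1 : Matrix V V ℝ)).IsHermitian := by
    refine hQ.sub ?_
    ext i j
    simp [Matrix.one_apply, eq_comm]
  -- `Q - lam • 1` is not positive definite, so it has an eigenvalue that is at most `0`.
  have hnot : ¬ (Qmatrix G - lam • (1 : Matrix V V ℝ)).PosDef := by
    intro hp
    have := hp.dotProduct_mulVec_pos hx
    simp only [star_trivial, Matrix.sub_mulVec, Matrix.smul_mulVec, Matrix.one_mulVec,
      dotProduct_sub, dotProduct_smul, smul_eq_mul] at this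
    linarith
  rw [hM.posDef_iff_eigenvalues_pos] at hnot
  push Not at hnot
  obtain ⟨i, hi⟩ := hnot
  have hv := hM.mulVec_eigenvectorBasis i
  have hv0 : (hM.eigenvectorBasis i).ofLp ≠ 0 := by
    intro h0
    exact hM.eigenvectorBasis.orthonormal.ne_zero i (by ext j; exact congrFun h0 j)
  have hmem : hM.eigenvalues i + lam ∈
      {q : ℝ | ∃ x : V → ℝ, x ≠ 0 ∧ Qmatrix G *ᵥ x = q • x} := by
    refine ⟨_, hv0, ?_⟩
    rw [Matrix.sub_mulVec, Matrix.smul_mulVec, Matrix.one_mulVec, sub_eq_iff_eq_add] at hv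
    rw [hv, add_smul]
  have hbdd : BddBelow {q : ℝ | ∃ x : V → ℝ, x ≠ 0 ∧ Qmatrix G *ᵥ x = q • x} := by
    refine ((Qmatrix G).finite_real_spectrum.subset ?_).bddBelow
    rintro q ⟨y, hy, hq⟩
    rw [← Matrix.spectrum_toLin']
    exact (Module.End.hasEigenvalue_of_hasEigenvector (x := y)
      ⟨Module.End.mem_eigenspace_iff.2 (by simpa using hq), hy⟩).mem_spectrum
  have := csInf_le hbdd hmem
  unfold qmin
  linarith

/-- The pendant neighbours of `v`. -/
noncomputable def pendAt {V : Type*} [Fintype V] (G : SimpleGraph V) (v : V) : Finset V :=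
  {w | G.Adj v w ∧ G.degree w = 1}

/-- The test vector: `1` at `v`, `-s` at the pendant neighbours of `v`, and `0` elsewhere. -/
noncomputable def starVec {V : Type*} [Fintype V] (G : SimpleGraph V) (v : V) (s : ℝ) : V → ℝ :=
  fun w => if w = v then 1 else if w ∈ pendAt G v then -s else 0

lemma Qmatrix_mulVec_apply {V : Type*} [Fintype V] (G : SimpleGraph V) (x : V → ℝ) (w : V) :
    (Qmatrix G *ᵥ x) w = G.degree w * x w + ∑ u ∈ G.neighborFinset w, x u := by
  unfold Qmatrix SimpleGraph.degMatrix
  rw [Matrix.add_mulVec, Pi.add_apply, Matrix.mulVec_diagonal, SimpleGraph.adjMatrix_mulVec_apply]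

lemma not_mem_pendAt_self {V : Type*} [Fintype V] (G : SimpleGraph V) (v : V) :
    v ∉ pendAt G v := by
  simp [pendAt]

lemma starVec_dot_self {V : Type*} [Fintype V] (G : SimpleGraph V) (v : V) (s : ℝ) :
    starVec G v s ⬝ᵥ starVec G v s = 1 + (pendAt G v).card * s ^ 2 := by
  have key : ∀ w, starVec G v s w * starVec G v s w =
      (if w = v then 1 else 0) + (if w ∈ pendAt G v then s ^ 2 else 0) := by
    intro w
    unfold starVec
    by_cases h1 : w = v
    · subst h1; simp [not_mem_pendAt_self]
    · by_cases h2 : w ∈ pendAt G v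
      · simp [h1, h2]; ring
      · simp [h1, h2]
  unfold dotProduct
  rw [Finset.sum_congr rfl fun w _ => key w, Finset.sum_add_distrib]
  simp [Finset.sum_ite_mem]

lemma starVec_quadForm {V : Type*} [Fintype V] (G : SimpleGraph V) (v : V) (s : ℝ) :
    starVec G v s ⬝ᵥ (Qmatrix G *ᵥ starVec G v s) =
      G.degree v + (pendAt G v).card * (s ^ 2 - 2 * s) := by
  have hsub : pendAt G v ⊆ G.neighborFinset v := by
    intro w hw
    simp only [pendAt, Finset.mem_filter, Finset.mem_univ, true_and] at hw
    simpa using hw.1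
  have hv : ∑ u ∈ G.neighborFinset v, starVec G v s u = (pendAt G v).card * (-s) := by
    have : ∀ u ∈ G.neighborFinset v, starVec G v s u = if u ∈ pendAt G v then -s else 0 := by
      intro u hu
      have hne : u ≠ v := by
        rintro rfl
        simp at hu
      simp [starVec, hne]
    rw [Finset.sum_congr rfl this, Finset.sum_ite_mem, Finset.inter_eq_right.2 hsub]
    simp
  have key : ∀ w, starVec G v s w * (Qmatrix G *ᵥ starVec G v s) w =
      (if w = v then G.degree v + (pendAt G v).card * (-s) else 0) +
        (if w ∈ pendAt G v then s ^ 2 - s else 0) := by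
    intro w
    rw [Qmatrix_mulVec_apply]
    by_cases h1 : w = v
    · subst h1
      rw [hv]
      simp [not_mem_pendAt_self, starVec]
    · by_cases h2 : w ∈ pendAt G v
      · have hpw := h2
        simp only [pendAt, Finset.mem_filter, Finset.mem_univ, true_and] at hpw
        -- the only neighbour of the pendant vertex `w` is `v`
        have hN : G.neighborFinset w = {v} := by
          obtain ⟨a, ha⟩ := Finset.card_eq_one.1 ((G.card_neighborFinset_eq_degree w).trans hpw.2)
          have : v ∈ G.neighborFinset w := by simpa using hpw.1.symm
          rw [ha, Finset.mem_singleton] at this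
          rw [ha, this]
        rw [hN, hpw.2]
        simp [starVec, h1, h2]
        ring
      · simp [starVec, h1, h2]
  unfold dotProduct
  rw [Finset.sum_congr rfl fun w _ => key w, Finset.sum_add_distrib]
  simp [Finset.sum_ite_mem]
  ring

/-- If `v` has `p` pendant neighbours and at most `c` other ones, then `qmin G` is bounded by every
`lam < 1` with `c (1 - lam) ≤ lam (1 - lam) + p lam`. -/
lemma qmin_le_of_pendants {V : Type*} [Fintype V] (G : SimpleGraph V) (v : V) (c lam : ℝ)
    (hl1 : lam < 1) (hd : (G.degree v : ℝ) ≤ c + (pendAt G v).card)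
    (h : c * (1 - lam) ≤ lam * (1 - lam) + (pendAt G v).card * lam) : qmin G ≤ lam := by
  -- this `s` minimises the Rayleigh quotient when `lam` is its minimum
  refine qmin_le_of_rayleigh G (starVec G v (1 / (1 - lam))) ?_ lam ?_
  · intro h0
    have := congrFun h0 v
    simp [starVec] at this
  · rw [starVec_quadForm, starVec_dot_self]
    set p : ℝ := ((pendAt G v).card : ℝ)
    have hpos : 0 < 1 - lam := by linarith
    have h1 : c ≤ lam + p * lam / (1 - lam) := by
      rw [← sub_le_iff_le_add', le_div_iff₀ hpos]
      linarith
    have h2 : p * ((1 / (1 - lam)) ^ 2 - 2 * (1 / (1 - lam))) =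
        lam * (p * (1 / (1 - lam)) ^ 2) - p - p * lam / (1 - lam) := by
      field_simp
      ring
    rw [h2]
    linarith

/-- The closed form in the bounds is the smaller root of `(a - 1) (1 - X) = X (1 - X) + t X`, and
lies in `[0, 1)`. -/
lemma root_facts (a t lam : ℝ) (ha : 1 ≤ a) (ht : 0 < t)
    (hlam : lam = (a + t - Real.sqrt ((a - 2) ^ 2 + 2 * a * t + t ^ 2)) / 2) :
    0 ≤ lam ∧ lam < 1 ∧ (a - 1) * (1 - lam) = lam * (1 - lam) + t * lam := by
  have hS : 0 ≤ (a - 2) ^ 2 + 2 * a * t + t ^ 2 := by positivity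
  have hsq := Real.sq_sqrt hS
  set r := Real.sqrt ((a - 2) ^ 2 + 2 * a * t + t ^ 2) with hr
  have hr1 : r ≤ a + t := by
    rw [hr]
    apply Real.sqrt_le_iff.2
    constructor
    · linarith
    · nlinarith
  have hr2 : a + t - 2 < r := by
    rw [hr]
    apply Real.lt_sqrt_of_sq_lt
    nlinarith
  refine ⟨by linarith, by linarith, ?_⟩
  rw [hlam]
  nlinarith

/-- Two adjacent pendant vertices would make up the whole connected graph. -/
lemma neighbor_not_pendant {V : Type*} [Fintype V] (G : SimpleGraph V)
    (hconn : G.Connected) (hnb : ¬ G.Colorable 2) (u w : V) (hadj : G.Adj u w)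
    (hu : G.degree u = 1) : G.degree w ≠ 1 := by
  intro hw
  have huniq : ∀ a b c : V, G.degree a = 1 → G.Adj a b → G.Adj a c → c = b := by
    intro a b c ha hb hc
    rw [← G.card_neighborFinset_eq_degree] at ha
    exact Finset.card_le_one.1 ha.le c (by simpa using hc) b (by simpa using hb)
  have hall : ∀ z, z = u ∨ z = w := by
    intro z
    obtain ⟨p⟩ := hconn.preconnected z u
    induction p with
    | nil => exact Or.inl rfl
    | cons h p ih =>
      rcases ih hadj hu with rfl | rfl
      · exact Or.inr (huniq _ _ _ hu hadj h.symm)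
      · exact Or.inl (huniq _ _ _ hw hadj.symm h.symm)
  apply hnb
  refine (G.colorable_of_fintype).mono ?_
  have : (Finset.univ : Finset V) ⊆ {u, w} := by
    intro z _
    simpa using hall z
  exact (Finset.card_le_card this).trans Finset.card_le_two

theorem stmt_19 {V : Type*} [Fintype V] (n k : ℕ) (hk : 1 ≤ k)
    (hcard : Fintype.card V = n) (G : SimpleGraph V)
    (hconn : G.Connected) (hnb : ¬ G.Colorable 2)
    (hpend : {v | G.degree v = 1}.ncard = k) :
    qmin G ≤ ((n : ℝ) - k + k / ((n : ℝ) - k) -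
        Real.sqrt (((n : ℝ) - k - 2) ^ 2 + 2 * k + (k : ℝ) ^ 2 / ((n : ℝ) - k) ^ 2)) / 2 ∧
    qmin G ≤ ((n : ℝ) - 1 + 1 / ((n : ℝ) - 1) -
        Real.sqrt ((n : ℝ) ^ 2 - 6 * n + 11 + 1 / ((n : ℝ) - 1) ^ 2)) / 2 := by
  set P : Finset V := {v | G.degree v = 1} with hP
  set C : Finset V := {v | ¬ G.degree v = 1} with hC
  have hPk : P.card = k := by
    rw [← hpend, ← Set.ncard_coe_finset]
    congr 1
    ext v
    simp [hP]
  have hPC : P.card + C.card = n := by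
    rw [hP, hC, Finset.card_filter_add_card_filter_not, Finset.card_univ, hcard]
  have hex : ∀ w, ∃ u, G.degree w = 1 → G.Adj w u := by
    intro w
    by_cases hw : G.degree w = 1
    · obtain ⟨u, hu⟩ := (G.degree_pos_iff_exists_adj w).1 (by omega)
      exact ⟨u, fun _ => hu⟩
    · exact ⟨w, fun h => absurd h hw⟩
  choose f hf using hex
  have hmaps : ∀ w ∈ P, f w ∈ C := by
    intro w hw
    simp only [hP, hC, Finset.mem_filter, Finset.mem_univ, true_and] at hw ⊢
    exact neighbor_not_pendant G hconn hnb w (f w) (hf w hw) hw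
  have hCne : C.Nonempty := by
    obtain ⟨w, hw⟩ := Finset.card_pos.1 (show 0 < P.card by omega)
    exact ⟨_, hmaps w hw⟩
  have hm1 : 1 ≤ C.card := hCne.card_pos
  have hmR : (1 : ℝ) ≤ C.card := by exact_mod_cast hm1
  have hkR : (1 : ℝ) ≤ k := by exact_mod_cast hk
  have hnR : (n : ℝ) = C.card + k := by
    rw [← hPC, hPk]; push_cast; ring
  obtain ⟨v, hvC, hv⟩ := Finset.exists_le_card_fiber_of_nsmul_le_card_of_maps_to
    (s := P) (t := C) (f := f) (b := (k : ℝ) / C.card) hmaps hCne (by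
      rw [nsmul_eq_mul, hPk, mul_div_cancel₀ _ (by positivity)])
  have hp : (k : ℝ) / C.card ≤ (pendAt G v).card := by
    refine hv.trans ?_
    norm_cast
    apply Finset.card_le_card
    intro w hw
    simp only [hP, pendAt, Finset.mem_filter, Finset.mem_univ, true_and] at hw ⊢
    refine ⟨?_, hw.1⟩
    rw [← hw.2]
    exact (hf w hw.1).symm
  -- the non-pendant neighbours of `v` lie among the other non-pendant vertices
  have hdeg : G.degree v ≤ (C.card - 1) + (pendAt G v).card := by
    rw [← G.card_neighborFinset_eq_degree, ← Finset.card_erase_of_mem hvC]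
    refine (Finset.card_le_card ?_).trans (Finset.card_union_le _ _)
    intro w hw
    have hw' : G.Adj v w := by simpa using hw
    simp only [hC, pendAt, Finset.mem_union, Finset.mem_erase, Finset.mem_filter,
      Finset.mem_univ, true_and]
    by_cases h : G.degree w = 1
    · exact Or.inr ⟨hw', h⟩
    · exact Or.inl ⟨hw'.ne', h⟩
  have hdegR : (G.degree v : ℝ) ≤ ((C.card : ℝ) - 1) + (pendAt G v).card := by
    have := hdeg
    rw [← Nat.cast_le (α := ℝ)] at this
    rwa [Nat.cast_add, Nat.cast_sub hm1, Nat.cast_one] at this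
  set m : ℝ := (C.card : ℝ) with hm
  have hm0 : 0 < m := by linarith
  -- both bounds are the root of `root_facts` for some `a ≥ m` and `t ≤ k / m`
  have main : ∀ a t : ℝ, m ≤ a → 0 < t → t ≤ k / m →
      qmin G ≤ (a + t - Real.sqrt ((a - 2) ^ 2 + 2 * a * t + t ^ 2)) / 2 := by
    intro a t ha ht htk
    obtain ⟨h0, h1, h2⟩ := root_facts a t _ (hmR.trans ha) ht rfl
    refine qmin_le_of_pendants G v (a - 1) _ h1 (by linarith) ?_
    rw [h2]
    gcongr
    linarith
  constructor
  · have := main m (k / m) le_rfl (by positivity) le_rfl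
    have e : (n : ℝ) - k = m := by linarith
    rw [e]
    convert this using 4
    field_simp
  · have hn1 : 0 < (n : ℝ) - 1 := by linarith
    have := main (n - 1) (1 / (n - 1)) (by linarith) (by positivity) (by
      apply div_le_div₀ <;> linarith)
    convert this using 4
    field_simp
    ring
end
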